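/- arXiv:1905.00212 — 3 statements merged into one kernel-verified Lean document; each statement's English description precedes it below -/
import Mathlib

section
/- The automorphism group of the graph Π_I is isomorphic to the alternating group A₅ on 5 letters. -/
/-- The ten faces of the hemi-icosahedron on vertex set `Fin 6`. -/
def faces : Finset (Finset (Fin 6)) :=
  {{0,1,2}, {0,2,3}, {0,3,4}, {0,4,5}, {0,5,1}, {1,2,4}, {2,3,5}, {1,3,4}, {2,4,5}, {1,3,5}}

/-- The 16-element vertex set: `Fin 6` together with the ten faces. -/
abbrev V16 := Fin 6 ⊕ {f : Finset (Fin 6) // f ∈ faces}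

/-- Vertex-face incidence: `v : Fin 6` is incident to a face `f` iff `v ∈ f`. -/
def piRel : V16 → V16 → Prop := fun a b =>
  match a, b with
  | Sum.inl v, Sum.inr f => v ∈ f.1
  | _, _ => False

instance : DecidableRel piRel := fun a b =>
  match a, b with
  | Sum.inl v, Sum.inr f => inferInstanceAs (Decidable (v ∈ f.1))
  | Sum.inl _, Sum.inl _ => Decidable.isFalse id
  | Sum.inr _, Sum.inl _ => Decidable.isFalse id
  | Sum.inr _, Sum.inr _ => Decidable.isFalse id

/-- `Π_I`, the projective vertex-face graph of the icosahedron (vertex-face graph of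
the hemi-icosahedron): `v : Fin 6` is adjacent to `f ∈ faces` iff `v ∈ f`. -/
def piI : SimpleGraph V16 := SimpleGraph.fromRel piRel

instance : DecidableRel piI.Adj := fun a b =>
  decidable_of_iff _ (SimpleGraph.fromRel_adj piRel a b).symm

namespace HemiIco

/-- pentagon `v` contains the edge `ab`. -/
def pent (v : Fin 6) (a b : Fin 5) : Bool :=
  Nat.testBit (match v with
    | 0 => 10102962 | 1 => 13190438 | 2 => 6480426
    | 3 => 3352340 | 4 => 5360024 | 5 => 11046540) (5 * a.val + b.val)

def isF (a b c : Fin 6) : Bool :=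
  Nat.testBit 131117011470855137994867894089838959140640446044200186311387392
    (36 * a.val + 6 * b.val + c.val)

theorem isF_iff : ∀ a b c : Fin 6, a ≠ b → a ≠ c → b ≠ c →
    (({a, b, c} : Finset (Fin 6)) ∈ faces ↔ isF a b c = true) := by
  decide +kernel

theorem isF_ne : ∀ a b c : Fin 6, isF a b c = true → a ≠ b ∧ a ≠ c ∧ b ≠ c := by
  decide +kernel

theorem pent_exists : ∀ σ : Equiv.Perm (Fin 5), Equiv.Perm.sign σ = 1 →
    ∀ v : Fin 6, ∃ k : Fin 6, ∀ a b, pent k (σ a) (σ b) = pent v a b := by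
  decide +kernel

theorem pent_inj : ∀ v w : Fin 6, (∀ a b, pent v a b = pent w a b) → v = w := by
  decide +kernel

theorem pent_one : ∀ σ : Equiv.Perm (Fin 5),
    (∀ v a b, pent v (σ a) (σ b) = pent v a b) → σ = 1 := by
  decide +kernel

def edgeFace (a b : Fin 5) : Finset (Fin 6) := Finset.univ.filter fun v => pent v a b = true

theorem edgeFace_mem : ∀ a b : Fin 5, a ≠ b → edgeFace a b ∈ faces := by
  decide +kernel

theorem exists_edgeFace : ∀ f ∈ faces, ∃ a b : Fin 5, a ≠ b ∧ edgeFace a b = f := by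
  decide +kernel

abbrev A5 := alternatingGroup (Fin 5)

noncomputable def act (σ : A5) (v : Fin 6) : Fin 6 :=
  (pent_exists σ.1 (Equiv.Perm.mem_alternatingGroup.1 σ.2) v).choose

theorem act_spec (σ : A5) (v : Fin 6) (a b : Fin 5) :
    pent (act σ v) (σ.1 a) (σ.1 b) = pent v a b :=
  (pent_exists σ.1 (Equiv.Perm.mem_alternatingGroup.1 σ.2) v).choose_spec a b

theorem act_unique (σ : A5) (v k : Fin 6)
    (h : ∀ a b, pent k (σ.1 a) (σ.1 b) = pent v a b) : act σ v = k := by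
  apply pent_inj
  intro a b
  have h1 := act_spec σ v (σ.1.symm a) (σ.1.symm b)
  have h2 := h (σ.1.symm a) (σ.1.symm b)
  simp only [Equiv.apply_symm_apply] at h1 h2
  rw [h1, h2]

theorem act_one (v : Fin 6) : act 1 v = v := act_unique _ _ _ fun _ _ => rfl

theorem act_mul (σ τ : A5) (v : Fin 6) : act (σ * τ) v = act σ (act τ v) := by
  apply act_unique
  intro a b
  have h : ∀ x, (σ * τ).1 x = σ.1 (τ.1 x) := fun _ => rfl
  rw [h, h, act_spec, act_spec]

noncomputable def p (σ : A5) : Equiv.Perm (Fin 6) where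
  toFun := act σ
  invFun := act σ⁻¹
  left_inv v := by rw [← act_mul, inv_mul_cancel, act_one]
  right_inv v := by rw [← act_mul, mul_inv_cancel, act_one]

theorem image_mem (σ : A5) (f : Finset (Fin 6)) (hf : f ∈ faces) :
    f.map (p σ).toEmbedding ∈ faces := by
  obtain ⟨a, b, hab, rfl⟩ := exists_edgeFace f hf
  have : (edgeFace a b).map (p σ).toEmbedding = edgeFace (σ.1 a) (σ.1 b) := by
    ext v
    obtain ⟨w, rfl⟩ := (p σ).surjective v
    have h : pent (p σ w) (σ.1 a) (σ.1 b) = pent w a b := act_spec σ w a b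
    simp [edgeFace, h]
  rw [this]
  exact edgeFace_mem _ _ (fun h => hab (σ.1.injective h))

theorem p_mul (σ τ : A5) (v : Fin 6) : p (σ * τ) v = p σ (p τ v) := act_mul σ τ v
theorem p_one (v : Fin 6) : p 1 v = v := act_one v

abbrev Fc := {f : Finset (Fin 6) // f ∈ faces}

noncomputable def fmap (σ : A5) (f : Fc) : Fc := ⟨f.1.map (p σ).toEmbedding, image_mem σ f.1 f.2⟩

theorem mem_fmap (σ : A5) (f : Fc) (v : Fin 6) : p σ v ∈ (fmap σ f).1 ↔ v ∈ f.1 := by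
  simp [fmap]

theorem fmap_one (f : Fc) : fmap 1 f = f := by
  apply Subtype.ext
  ext v
  rw [← mem_fmap 1 f v, p_one]

theorem fmap_mul (σ τ : A5) (f : Fc) : fmap (σ * τ) f = fmap σ (fmap τ f) := by
  apply Subtype.ext
  ext v
  obtain ⟨w, rfl⟩ := (p (σ * τ)).surjective v
  rw [mem_fmap, p_mul, mem_fmap, mem_fmap]

noncomputable def q (σ : A5) : Equiv.Perm Fc where
  toFun := fmap σ
  invFun := fmap σ⁻¹
  left_inv v := by rw [← fmap_mul, inv_mul_cancel, fmap_one]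
  right_inv v := by rw [← fmap_mul, mul_inv_cancel, fmap_one]

theorem adj_lr (v : Fin 6) (f : Fc) : piI.Adj (Sum.inl v) (Sum.inr f) ↔ v ∈ f.1 := by
  simp [piI, SimpleGraph.fromRel_adj, piRel]

theorem adj_rl (v : Fin 6) (f : Fc) : piI.Adj (Sum.inr f) (Sum.inl v) ↔ v ∈ f.1 := by
  rw [SimpleGraph.adj_comm, adj_lr]

theorem adj_ll (v w : Fin 6) : ¬ piI.Adj (Sum.inl v) (Sum.inl w) := by
  simp [piI, SimpleGraph.fromRel_adj, piRel]

theorem adj_rr (v w : Fc) : ¬ piI.Adj (Sum.inr v) (Sum.inr w) := by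
  simp [piI, SimpleGraph.fromRel_adj, piRel]

noncomputable def phi (σ : A5) : piI ≃g piI where
  toEquiv := Equiv.sumCongr (p σ) (q σ)
  map_rel_iff' := by
    rintro (v | f) (w | g)
    · exact iff_of_false (adj_ll _ _) (adj_ll _ _)
    · exact (adj_lr _ _).trans ((mem_fmap σ g v).trans (adj_lr _ _).symm)
    · exact (adj_rl _ _).trans ((mem_fmap σ f w).trans (adj_rl _ _).symm)
    · exact iff_of_false (adj_rr _ _) (adj_rr _ _)

noncomputable def Phi : A5 →* (piI ≃g piI) where
  toFun := phi
  map_one' := by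
    apply RelIso.ext
    rintro (v | f)
    · exact congrArg Sum.inl (p_one v)
    · exact congrArg Sum.inr (fmap_one f)
  map_mul' σ τ := by
    apply RelIso.ext
    rintro (v | f)
    · exact congrArg Sum.inl (p_mul σ τ v)
    · exact congrArg Sum.inr (fmap_mul σ τ f)

theorem Phi_inj : Function.Injective Phi := by
  rw [injective_iff_map_eq_one]
  intro σ h
  apply Subtype.ext
  apply pent_one
  intro v a b
  have h1 : (Phi σ) (Sum.inl v) = Sum.inl v := by rw [h]; rfl
  have h2 : act σ v = v := Sum.inl_injective h1
  have := act_spec σ v a b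
  rwa [h2] at this

theorem deg_l : ∀ v : Fin 6, piI.degree (Sum.inl v) = 5 := by decide +kernel
theorem deg_r : ∀ f : Fc, piI.degree (Sum.inr f) = 3 := by decide +kernel

theorem exists_l (g : piI ≃g piI) (v : Fin 6) : ∃ w, g (Sum.inl v) = Sum.inl w := by
  rcases h : g (Sum.inl v) with w | f
  · exact ⟨w, rfl⟩
  · have := g.degree_eq (Sum.inl v)
    rw [h, deg_l, deg_r] at this
    omega

theorem exists_r (g : piI ≃g piI) (f : Fc) : ∃ w, g (Sum.inr f) = Sum.inr w := by
  rcases h : g (Sum.inr f) with w | f'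
  · have := g.degree_eq (Sum.inr f)
    rw [h, deg_l, deg_r] at this
    omega
  · exact ⟨f', rfl⟩

noncomputable def vm (g : piI ≃g piI) (v : Fin 6) : Fin 6 := (exists_l g v).choose
theorem vm_spec (g : piI ≃g piI) (v : Fin 6) : g (Sum.inl v) = Sum.inl (vm g v) :=
  (exists_l g v).choose_spec
noncomputable def fm (g : piI ≃g piI) (f : Fc) : Fc := (exists_r g f).choose
theorem fm_spec (g : piI ≃g piI) (f : Fc) : g (Sum.inr f) = Sum.inr (fm g f) :=
  (exists_r g f).choose_spec

theorem vm_inj (g : piI ≃g piI) : Function.Injective (vm g) := by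
  intro v w h
  apply Sum.inl_injective (β := Fc)
  apply g.injective
  rw [vm_spec, vm_spec, h]

theorem mem_fm (g : piI ≃g piI) (f : Fc) (v : Fin 6) : vm g v ∈ (fm g f).1 ↔ v ∈ f.1 := by
  rw [← adj_lr, ← adj_lr, ← vm_spec, ← fm_spec]
  exact g.map_rel_iff

theorem fm_eq (g : piI ≃g piI) (f : Fc) : (fm g f).1 = f.1.image (vm g) := by
  ext v
  obtain ⟨w, rfl⟩ := (Finite.injective_iff_surjective.1 (vm_inj g)) v
  rw [mem_fm, (vm_inj g).mem_finset_image]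

theorem vm_face (g : piI ≃g piI) (a b c : Fin 6) (h : isF a b c = true) :
    isF (vm g a) (vm g b) (vm g c) = true := by
  obtain ⟨h1, h2, h3⟩ := isF_ne a b c h
  have hf := (isF_iff a b c h1 h2 h3).2 h
  rw [← isF_iff _ _ _ ((vm_inj g).ne h1) ((vm_inj g).ne h2) ((vm_inj g).ne h3)]
  have := (fm g ⟨_, hf⟩).2
  rw [fm_eq] at this
  simpa [Finset.image_insert] using this

theorem third : ∀ a b c d e : Fin 6, isF a b c = true → isF a b d = true → isF a b e = true →
    d ≠ c → e ≠ c → d = e := by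
  decide +kernel

theorem eq_of (g h : piI ≃g piI) (h0 : vm g 0 = vm h 0) (h1 : vm g 1 = vm h 1)
    (h2 : vm g 2 = vm h 2) : g = h := by
  have key : ∀ a b c d : Fin 6, isF a b c = true → isF a b d = true → d ≠ c →
      vm g a = vm h a → vm g b = vm h b → vm g c = vm h c → vm g d = vm h d := by
    intro a b c d hc hd hdc ea eb ec
    apply third (vm g a) (vm g b) (vm g c) _ _ (vm_face g _ _ _ hc) (vm_face g _ _ _ hd)
    · rw [ea, eb]; exact vm_face h _ _ _ hd
    · exact (vm_inj g).ne hdc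
    · rw [ec]; exact (vm_inj h).ne hdc
  have h3 := key 0 2 1 3 (by decide) (by decide) (by decide) h0 h2 h1
  have h4 := key 1 2 0 4 (by decide) (by decide) (by decide) h1 h2 h0
  have h5 := key 0 1 2 5 (by decide) (by decide) (by decide) h0 h1 h2
  have hv : vm g = vm h := by
    funext v
    fin_cases v <;> assumption
  apply RelIso.ext
  rintro (v | f)
  · rw [vm_spec, vm_spec, hv]
  · rw [fm_spec, fm_spec]
    congr 1
    apply Subtype.ext
    rw [fm_eq, fm_eq, hv]

abbrev Trip := {t : Fin 6 × Fin 6 × Fin 6 // isF t.1 t.2.1 t.2.2 = true}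

theorem card_trip : Fintype.card Trip = 60 := by decide +kernel

noncomputable def toTrip (g : piI ≃g piI) : Trip :=
  ⟨(vm g 0, vm g 1, vm g 2), vm_face g 0 1 2 (by decide)⟩

theorem toTrip_inj : Function.Injective toTrip := by
  intro g h e
  have e' := congrArg Subtype.val e
  simp only [toTrip, Prod.mk.injEq] at e'
  exact eq_of g h e'.1 e'.2.1 e'.2.2

theorem Phi_bij : Function.Bijective Phi := by
  haveI : Finite (piI ≃g piI) := Finite.of_injective _ toTrip_inj
  refine (Nat.bijective_iff_injective_and_card _).2 ⟨Phi_inj, ?_⟩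
  have hA : Nat.card A5 = 60 := by
    rw [nat_card_alternatingGroup]
    simp [Nat.factorial]
  have h1 := Nat.card_le_card_of_injective _ Phi_inj
  have h2 := Nat.card_le_card_of_injective _ toTrip_inj
  rw [Nat.card_eq_fintype_card (α := Trip), card_trip] at h2
  omega

end HemiIco

/-- The automorphism group of `Π_I` is isomorphic to the alternating group `A₅`. -/
theorem stmt_0 : Nonempty ((piI ≃g piI) ≃* alternatingGroup (Fin 5)) := by
  exact ⟨(MulEquiv.ofBijective HemiIco.Phi HemiIco.Phi_bij).symm⟩
end

section
/- The automorphism group of the graph Ξ_I is isomorphic to the alternating group A₄ on 4 letters. -/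
/-- The relation of `Π_I` together with the three extra edges `{1,3}`, `{0,2}`, `{4,5}`. -/
def xiRel : V16 → V16 → Prop := fun a b =>
  match a, b with
  | Sum.inl v, Sum.inr f => v ∈ f.1
  | Sum.inl v, Sum.inl w => (v = 1 ∧ w = 3) ∨ (v = 0 ∧ w = 2) ∨ (v = 4 ∧ w = 5)
  | _, _ => False

instance : DecidableRel xiRel := fun a b =>
  match a, b with
  | Sum.inl v, Sum.inr f => inferInstanceAs (Decidable (v ∈ f.1))
  | Sum.inl v, Sum.inl w =>
      inferInstanceAs (Decidable ((v = 1 ∧ w = 3) ∨ (v = 0 ∧ w = 2) ∨ (v = 4 ∧ w = 5)))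
  | Sum.inr _, Sum.inl _ => Decidable.isFalse id
  | Sum.inr _, Sum.inr _ => Decidable.isFalse id

/-- `Ξ_I`: the graph `Π_I` with the three extra edges `{1,3}`, `{0,2}`, `{4,5}` added. -/
def xiI : SimpleGraph V16 := SimpleGraph.fromRel xiRel

instance : DecidableRel xiI.Adj := fun a b =>
  decidable_of_iff _ (SimpleGraph.fromRel_adj xiRel a b).symm

/-- The four faces containing no extra edge are labelled by `Fin 4`; `vtx i j` is the
vertex shared by faces `i` and `j`. -/
def vtx (i j : Fin 4) : Fin 6 :=
  (![![0,0,4,3],![0,0,1,5],![4,1,0,2],![3,5,2,0]] : Fin 4 → Fin 4 → Fin 6) i j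

def end1 : Fin 6 → Fin 4 := ![0,1,2,0,0,1]
def end2 : Fin 6 → Fin 4 := ![1,2,3,3,2,3]

def partner : Fin 6 → Fin 6 := ![2,3,0,1,5,4]

def act (s : Equiv.Perm (Fin 4)) (v : Fin 6) : Fin 6 := vtx (s (end1 v)) (s (end2 v))

lemma vtx_symm : ∀ i j, vtx i j = vtx j i := by decide

lemma ends_vtx : ∀ i j, i ≠ j → (end1 (vtx i j) = i ∧ end2 (vtx i j) = j) ∨
    (end1 (vtx i j) = j ∧ end2 (vtx i j) = i) := by decide

lemma end_ne : ∀ v, end1 v ≠ end2 v := by decide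

lemma vtx_ends : ∀ v, vtx (end1 v) (end2 v) = v := by decide

lemma act_one (v : Fin 6) : act 1 v = v := vtx_ends v

lemma act_mul (s t : Equiv.Perm (Fin 4)) (v : Fin 6) : act (s * t) v = act s (act t v) := by
  have hne : t (end1 v) ≠ t (end2 v) := fun h => end_ne v (t.injective h)
  unfold act
  rcases ends_vtx _ _ hne with ⟨h1, h2⟩ | ⟨h1, h2⟩
  · rw [h1, h2]; rfl
  · rw [h1, h2, vtx_symm]; rfl

lemma act_faces : ∀ s : Equiv.Perm (Fin 4), Equiv.Perm.sign s = 1 →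
    ∀ f ∈ faces, f.image (act s) ∈ faces := by decide +kernel

lemma act_inj : ∀ s : Equiv.Perm (Fin 4), (∀ v, act s v = v) → s = 1 := by decide +kernel

lemma act_partner : ∀ s : Equiv.Perm (Fin 4), ∀ v, act s (partner v) = partner (act s v) := by
  decide +kernel

lemma adj_ll : ∀ v w : Fin 6, xiI.Adj (Sum.inl v) (Sum.inl w) ↔ w = partner v := by
  decide +kernel

lemma adj_lr (v : Fin 6) (f) : xiI.Adj (Sum.inl v) (Sum.inr f) ↔ v ∈ f.1 := by
  simp [xiI, xiRel, SimpleGraph.fromRel_adj]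

lemma adj_rl (v : Fin 6) (f) : xiI.Adj (Sum.inr f) (Sum.inl v) ↔ v ∈ f.1 := by
  rw [SimpleGraph.adj_comm, adj_lr]

lemma adj_rr (e f) : ¬ xiI.Adj (Sum.inr e) (Sum.inr f) := by
  simp [xiI, xiRel, SimpleGraph.fromRel_adj]

lemma deg_l : ∀ v : Fin 6, xiI.degree (Sum.inl v) = 6 := by decide +kernel
lemma deg_r : ∀ f, xiI.degree (Sum.inr f) = 3 := by decide +kernel

def faceAct (s : alternatingGroup (Fin 4)) (f : {f : Finset (Fin 6) // f ∈ faces}) :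
    {f : Finset (Fin 6) // f ∈ faces} :=
  ⟨f.1.image (act s.1), act_faces s.1 (Equiv.Perm.mem_alternatingGroup.1 s.2) f.1 f.2⟩

def fullAct (s : alternatingGroup (Fin 4)) : V16 → V16 := Sum.map (act s.1) (faceAct s)

lemma fullAct_one (x : V16) : fullAct 1 x = x := by
  have h : act 1 = id := funext act_one
  rcases x with v | f
  · simp [fullAct, act_one]
  · simp [fullAct, faceAct, h]

lemma fullAct_mul (s t : alternatingGroup (Fin 4)) (x : V16) :
    fullAct (s * t) x = fullAct s (fullAct t x) := by
  have h : act (s.1 * t.1) = act s.1 ∘ act t.1 := funext (act_mul _ _)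
  rcases x with v | f
  · simp [fullAct, act_mul]
  · simp [fullAct, faceAct, h, Finset.image_image]

lemma act_injective (s : Equiv.Perm (Fin 4)) : Function.Injective (act s) := by
  intro v w h
  have := congrArg (act s⁻¹) h
  simpa [← act_mul, act_one] using this

def psiFun (s : alternatingGroup (Fin 4)) : xiI ≃g xiI where
  toFun := fullAct s
  invFun := fullAct s⁻¹
  left_inv x := by rw [← fullAct_mul, inv_mul_cancel, fullAct_one]
  right_inv x := by rw [← fullAct_mul, mul_inv_cancel, fullAct_one]
  map_rel_iff' := by
    have hi := act_injective s.1
    rintro (v | e) (w | f)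
    · simp only [Equiv.coe_fn_mk, fullAct, Sum.map_inl, adj_ll, ← act_partner]
      exact hi.eq_iff
    · simp only [Equiv.coe_fn_mk, fullAct, Sum.map_inl, Sum.map_inr, adj_lr, faceAct]
      exact hi.mem_finset_image
    · simp only [Equiv.coe_fn_mk, fullAct, Sum.map_inl, Sum.map_inr, adj_rl, faceAct]
      exact hi.mem_finset_image
    · simp only [Equiv.coe_fn_mk, fullAct, Sum.map_inr, adj_rr]

def psi : alternatingGroup (Fin 4) →* (xiI ≃g xiI) where
  toFun := psiFun
  map_one' := by ext1 x; exact fullAct_one x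
  map_mul' s t := by ext1 x; exact fullAct_mul s t x

lemma classify : ∀ a b c : Fin 6,
    (∀ f ∈ faces, f.image ![a, b, partner a, partner b, c, partner c] ∈ faces) →
    ∃ s : Equiv.Perm (Fin 4), Equiv.Perm.sign s = 1 ∧
      ∀ v, act s v = ![a, b, partner a, partner b, c, partner c] v := by
  decide +kernel

lemma faces_card : ∀ f ∈ faces, f.card = 3 := by decide

lemma psi_surj : Function.Surjective psi := by
  intro g
  have hl : ∀ v : Fin 6, ∃ w : Fin 6, g (Sum.inl v) = Sum.inl w := by
    intro v
    rcases h : g (Sum.inl v) with w | f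
    · exact ⟨w, rfl⟩
    · have := g.degree_eq (Sum.inl v)
      rw [h, deg_l, deg_r] at this
      omega
  have hr : ∀ f, ∃ e, g (Sum.inr f) = Sum.inr e := by
    intro f
    rcases h : g (Sum.inr f) with w | e
    · have := g.degree_eq (Sum.inr f)
      rw [h, deg_l, deg_r] at this
      omega
    · exact ⟨e, rfl⟩
  choose p hp using hl
  choose q hq using hr
  have pinj : Function.Injective p := by
    intro v w h
    have : g (Sum.inl v) = g (Sum.inl w) := by rw [hp, hp, h]
    exact Sum.inl_injective (g.injective this)
  have hpart : ∀ v, p (partner v) = partner (p v) := by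
    intro v
    rw [← adj_ll, ← hp, ← hp, g.map_adj_iff, adj_ll]
  have him : ∀ f, f.1.image p = (q f).1 := by
    intro f
    apply Finset.eq_of_subset_of_card_le
    · intro w hw
      obtain ⟨v, hv, rfl⟩ := Finset.mem_image.1 hw
      rwa [← adj_lr, ← hp, ← hq, g.map_adj_iff, adj_lr]
    · rw [Finset.card_image_of_injective _ pinj, faces_card _ f.2, faces_card _ (q f).2]
  have hpe : p = ![p 0, p 1, partner (p 0), partner (p 1), p 4, partner (p 4)] := by
    funext v
    fin_cases v
    · rfl
    · rfl
    · exact hpart 0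
    · exact hpart 1
    · rfl
    · exact hpart 4
  obtain ⟨s, hs, hv⟩ := classify (p 0) (p 1) (p 4) (by
    rw [← hpe]
    intro f hf
    rw [him ⟨f, hf⟩]
    exact (q ⟨f, hf⟩).2)
  rw [← hpe] at hv
  have hsp : act s = p := funext hv
  refine ⟨⟨s, Equiv.Perm.mem_alternatingGroup.2 hs⟩, ?_⟩
  ext1 x
  rcases x with v | f
  · rw [hp, ← hv]; rfl
  · rw [hq]
    change Sum.inr _ = _
    congr 1
    apply Subtype.ext
    rw [← him, ← hsp]; rfl

lemma psi_inj : Function.Injective psi := by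
  rw [injective_iff_map_eq_one]
  intro s h
  apply Subtype.ext
  apply act_inj
  intro v
  have := congrArg (fun g : xiI ≃g xiI => g (Sum.inl v)) h
  exact Sum.inl_injective this

/-- The automorphism group of `Ξ_I` is isomorphic to the alternating group `A₄`. -/
theorem stmt_1 : Nonempty ((xiI ≃g xiI) ≃* alternatingGroup (Fin 4)) :=
  ⟨(MulEquiv.ofBijective psi ⟨psi_inj, psi_surj⟩).symm⟩
end

section
/- Every automorphism of the graph Ξ_I is also an automorphism of the graph Π_I; that is, every automorphism of Ξ_I permutes the three extra edges {1,3}, {0,2}, {4,5} among themselves and preserves the edge set of Π_I. -/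
theorem pi_iff_xi : ∀ a b : V16,
    piI.Adj a b ↔ xiI.Adj a b ∧ a.isLeft ≠ b.isLeft := by
  intro a b
  rcases a with v | f <;> rcases b with w | g <;>
    simp [piI, xiI, SimpleGraph.fromRel_adj, piRel, xiRel]

set_option maxRecDepth 100000 in
theorem deg_xi : ∀ a : V16, xiI.degree a = if a.isLeft then 6 else 3 := by
  decide +kernel

/-- Every automorphism of `Ξ_I` is also an automorphism of `Π_I`: it preserves the edge
set of `Π_I` (equivalently, it permutes the three extra edges among themselves). -/
theorem stmt_11 (φ : xiI ≃g xiI) :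
    ∀ a b : V16, piI.Adj (φ a) (φ b) ↔ piI.Adj a b := by
  intro a b
  have key : ∀ x : V16, (φ x).isLeft = x.isLeft := by
    intro x
    have h : xiI.degree (φ x) = xiI.degree x := φ.degree_eq x
    rw [deg_xi, deg_xi] at h
    cases h1 : (φ x).isLeft <;> cases h2 : x.isLeft <;> simp_all
  rw [pi_iff_xi, pi_iff_xi, key, key, φ.map_adj_iff]
end
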